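/- Let G = (V, E) be a finite directed graph with nonnegative real edge weights w. There exists ε₀ > 0 such that for every 0 < ε ≤ ε₀, defining perturbed weights w_ε(e) = w(e) + ε for every edge e, the following holds for every pair of nodes s, t with t reachable from s: a path P from s to t is a shortest path under w_ε if and only if P is a shortest path under w having the minimum number of edges among all shortest s–t paths under w. In particular, under w_ε all shortest paths between any fixed pair of nodes have the same number of edges. -/

import Mathlib

/-- `IsWalk E l s t`: the nonempty list `l` is the node sequence of a walk from `s` to `t`
in the directed graph with edge relation `E`. -/
def IsWalk {V : Type*} (E : V → V → Prop) (l : List V) (s t : V) : Prop :=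
  l ≠ [] ∧ l.head? = some s ∧ l.getLast? = some t ∧ l.Chain' E

/-- The length (total weight) of a walk with node sequence `l` under edge weights `w`. -/
def walkLen {V : Type*} (w : V → V → ℝ) (l : List V) : ℝ :=
  ((l.zip l.tail).map fun e => w e.1 e.2).sum

/-- `edist E w s t`: the distance from `s` to `t`, i.e. the infimum of the lengths of all
walks from `s` to `t` (`⊤` if there is none). -/
noncomputable def edist {V : Type*} (E : V → V → Prop) (w : V → V → ℝ) (s t : V) : EReal :=
  sInf {x : EReal | ∃ l : List V, IsWalk E l s t ∧ x = (walkLen w l : ℝ)}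

/-! Send a walk to its cost (length, number of edges) `∈ ℝ × ℕ`. Adding `ε` to every edge weight
turns the length into the scalarization `a + ε * n` of the cost `(a, n)`, whereas a shortest walk
with fewest edges is one of lexicographically least cost. For a single pair of costs the two orders
agree once `ε` is small, hence they agree on any finite set of costs.

If no `s`–`t` walk runs through a cycle of negative length, deleting cycles shows that every
`s`–`t` walk is dominated in both coordinates by one without repeated nodes, of which there are
finitely many. Otherwise the same cycle stays negative for small `ε`, and going around it again and
again shows that neither problem has a minimizer. -/

open Filter Topology

section Minimizers

variable {α β γ δ : Type*}

lemma isMinOn_comp_of_le_imp_le [PartialOrder β] [Preorder γ] [Preorder δ] {c : α → β}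
    {f : β → γ} {g : β → δ} {S F : Set α} {a : α} (hf : StrictMono f) (hg : Monotone g)
    (hFS : F ⊆ S) (hF : ∀ x ∈ S, ∃ y ∈ F, c y ≤ c x)
    (hfg : ∀ x ∈ F, ∀ y ∈ F, f (c x) ≤ f (c y) → g (c x) ≤ g (c y))
    (ha : a ∈ S) (hmin : IsMinOn (f ∘ c) S a) : IsMinOn (g ∘ c) S a := by
  rw [isMinOn_iff] at hmin ⊢
  obtain ⟨b, hbF, hba⟩ := hF a ha
  have hcb : c b = c a :=
    hba.eq_of_not_lt fun hlt => (hf hlt).not_ge (hmin b (hFS hbF))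
  intro x hx
  obtain ⟨y, hyF, hyx⟩ := hF x hx
  have hby : f (c b) ≤ f (c y) := (congrArg f hcb).trans_le (hmin y (hFS hyF))
  calc g (c a) = g (c b) := congrArg g hcb.symm
    _ ≤ g (c y) := hfg b hbF y hyF hby
    _ ≤ g (c x) := hg hyx

lemma isMinOn_toLex_iff [PartialOrder β] [Preorder γ] {f : α → β} {g : α → γ} {S : Set α}
    {a : α} (ha : a ∈ S) :
    IsMinOn (fun x => toLex (f x, g x)) S a ↔
      IsMinOn f S a ∧ IsMinOn g {x ∈ S | IsMinOn f S x} a := by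
  simp only [isMinOn_iff, Prod.Lex.toLex_le_toLex', Set.mem_ofPred_eq]
  constructor
  · exact fun h => ⟨fun x hx => (h x hx).1,
      fun x hx => (h x hx.1).2 ((h x hx.1).1.antisymm (hx.2 a ha))⟩
  · exact fun h x hx => ⟨h.1 x hx, fun hax => h.2 x ⟨hx, fun y hy => hax ▸ h.1 y hy⟩⟩

end Minimizers

section Scalarization

/-- The weighted-sum scalarization `a + ε * n` of a two-objective cost `(a, n)`. For the cost
`walkCost w l` of a walk it is the length of `l` after adding `ε` to every edge weight. -/
def scalarize (ε : ℝ) (x : ℝ × ℕ) : ℝ := x.1 + ε * x.2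

lemma scalarize_strictMono {ε : ℝ} (hε : 0 < ε) : StrictMono (scalarize ε) := by
  intro x y hxy
  unfold scalarize
  rcases Prod.lt_iff.1 hxy with ⟨h₁, h₂⟩ | ⟨h₁, h₂⟩
  · exact add_lt_add_of_lt_of_le h₁ (by gcongr)
  · exact add_lt_add_of_le_of_lt h₁ (by gcongr)

lemma tendsto_scalarize_zero (x : ℝ × ℕ) : Tendsto (scalarize · x) (𝓝 0) (𝓝 x.1) := by
  have hcont : Continuous (scalarize · x) := by
    unfold scalarize
    fun_prop
  simpa [scalarize] using hcont.tendsto 0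

lemma eventually_scalarize_lt_of_toLex_lt {x y : ℝ × ℕ} (hxy : toLex x < toLex y) :
    ∀ᶠ ε in 𝓝[>] 0, scalarize ε x < scalarize ε y := by
  rcases Prod.Lex.toLex_lt_toLex.1 hxy with h₁ | ⟨h₁, h₂⟩
  · exact ((tendsto_scalarize_zero x).eventually_lt (tendsto_scalarize_zero y) h₁).filter_mono
      nhdsWithin_le_nhds
  · filter_upwards [self_mem_nhdsWithin] with ε hε
    exact scalarize_strictMono hε (Prod.lt_iff.2 (Or.inr ⟨h₁.le, h₂⟩))

lemma eventually_scalarize_le_iff_toLex_le (x y : ℝ × ℕ) :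
    ∀ᶠ ε in 𝓝[>] 0, (scalarize ε x ≤ scalarize ε y ↔ toLex x ≤ toLex y) := by
  rcases le_or_gt (toLex x) (toLex y) with hle | hlt
  · rcases hle.eq_or_lt with heq | hlt
    · simp [toLex_inj.1 heq]
    · filter_upwards [eventually_scalarize_lt_of_toLex_lt hlt] with ε hε
      exact iff_of_true hε.le hle
  · filter_upwards [eventually_scalarize_lt_of_toLex_lt hlt] with ε hε
    exact iff_of_false hε.not_ge hlt.not_ge

lemma eventually_isMinOn_scalarize_iff_toLex {α : Type*} {c : α → ℝ × ℕ} {S F : Set α}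
    (hfin : F.Finite) (hFS : F ⊆ S) (hF : ∀ x ∈ S, ∃ y ∈ F, c y ≤ c x) :
    ∀ᶠ ε in 𝓝[>] 0, ∀ a ∈ S, (IsMinOn (scalarize ε ∘ c) S a ↔ IsMinOn (toLex ∘ c) S a) := by
  have hle : ∀ᶠ ε in 𝓝[>] 0, ∀ x ∈ F, ∀ y ∈ F,
      (scalarize ε (c x) ≤ scalarize ε (c y) ↔ toLex (c x) ≤ toLex (c y)) := by
    simp only [eventually_all_finite hfin]
    exact fun x _ y _ => eventually_scalarize_le_iff_toLex_le (c x) (c y)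
  filter_upwards [hle, self_mem_nhdsWithin] with ε hε hpos a ha
  have hmono : StrictMono (scalarize ε) := scalarize_strictMono hpos
  have hlex : StrictMono (toLex : ℝ × ℕ → ℝ ×ₗ ℕ) := Prod.Lex.toLex_strictMono
  exact ⟨isMinOn_comp_of_le_imp_le hmono hlex.monotone hFS hF
      (fun x hx y hy => (hε x hx y hy).1) ha,
    isMinOn_comp_of_le_imp_le hlex hmono.monotone hFS hF
      (fun x hx y hy => (hε x hx y hy).2) ha⟩

end Scalarization

section Walks

variable {V : Type*} {E : V → V → Prop} {w : V → V → ℝ} {s t x : V} {p c q l P : List V}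

/-- The two objectives of a walk with node sequence `l`: its length under `w` and its number of
edges, which is one less than the number of nodes. -/
def walkCost (w : V → V → ℝ) (l : List V) : ℝ × ℕ := (walkLen w l, l.length - 1)

/-- Some walk from `s` to `t` runs through a closed walk of negative length, the node sequence of
the closed walk being `x :: (c ++ [x])`. -/
def HasNegativeCycle (E : V → V → Prop) (w : V → V → ℝ) (s t : V) : Prop :=
  ∃ p x c q, IsWalk E (p ++ x :: (c ++ x :: q)) s t ∧ walkLen w (x :: (c ++ [x])) < 0

lemma walkLen_singleton (w : V → V → ℝ) (x : V) : walkLen w [x] = 0 := by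
  simp [walkLen]

lemma walkLen_cons_cons (w : V → V → ℝ) (x y : V) (l : List V) :
    walkLen w (x :: y :: l) = w x y + walkLen w (y :: l) := by
  simp [walkLen]

lemma walkLen_append_cons (w : V → V → ℝ) (p : List V) (x : V) (q : List V) :
    walkLen w (p ++ x :: q) = walkLen w (p ++ [x]) + walkLen w (x :: q) := by
  induction p with
  | nil => simp [walkLen_singleton]
  | cons a p ih =>
    cases p with
    | nil => simp [walkLen_cons_cons, walkLen_singleton]
    | cons b p =>
      simp only [List.cons_append, walkLen_cons_cons] at ih ⊢
      rw [ih, add_assoc]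

lemma walkLen_insert_cycle (w : V → V → ℝ) (p : List V) (x : V) (c q : List V) :
    walkLen w (p ++ x :: (c ++ x :: q)) =
      walkLen w (p ++ x :: q) + walkLen w (x :: (c ++ [x])) := by
  rw [walkLen_append_cons w p x (c ++ x :: q), walkLen_append_cons w p x q, ← List.cons_append,
    walkLen_append_cons w (x :: c) x q, List.cons_append]
  ring

lemma walkLen_add_const (w : V → V → ℝ) (ε : ℝ) (l : List V) :
    walkLen (fun u z => w u z + ε) l = scalarize ε (walkCost w l) := by
  simp [walkLen, walkCost, scalarize, List.sum_map_add, mul_comm]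

lemma isWalk_insert_cycle_iff :
    IsWalk E (p ++ x :: (c ++ x :: q)) s t ↔
      IsWalk E (p ++ x :: q) s t ∧ (x :: (c ++ [x])).IsChain E := by
  have hchain : (p ++ x :: (c ++ x :: q)).IsChain E ↔
      (p ++ x :: q).IsChain E ∧ (x :: (c ++ [x])).IsChain E := by
    rw [List.isChain_split (l₁ := p), List.isChain_split (l₁ := p) (l₂ := q),
      ← List.cons_append, List.isChain_split (l₁ := x :: c), List.cons_append]
    tauto
  have hhead : (p ++ x :: (c ++ x :: q)).head? = (p ++ x :: q).head? := by cases p <;> rfl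
  have hlast : (p ++ x :: (c ++ x :: q)).getLast? = (p ++ x :: q).getLast? := by
    simp [List.getLast?_append, List.getLast?_cons]
  rw [IsWalk, IsWalk, hhead, hlast]
  constructor
  · rintro ⟨-, hs, ht, hl⟩
    exact ⟨⟨by simp, hs, ht, (hchain.1 hl).1⟩, (hchain.1 hl).2⟩
  · rintro ⟨⟨-, hs, ht, hq⟩, hc⟩
    exact ⟨by simp, hs, ht, hchain.2 ⟨hq, hc⟩⟩

lemma IsWalk.one_le_length (h : IsWalk E l s t) : 1 ≤ l.length :=
  List.length_pos_iff.2 h.1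

lemma coe_walkLen_eq_edist_iff (hP : IsWalk E P s t) :
    (walkLen w P : EReal) = edist E w s t ↔ IsMinOn (walkLen w) {Q | IsWalk E Q s t} P := by
  rw [isMinOn_iff]
  constructor
  · intro h Q hQ
    exact EReal.coe_le_coe_iff.1 (h.le.trans (sInf_le ⟨Q, hQ, rfl⟩))
  · intro h
    refine le_antisymm (le_sInf ?_) (sInf_le ⟨P, hP, rfl⟩)
    rintro _ ⟨Q, hQ, rfl⟩
    exact EReal.coe_le_coe_iff.2 (h Q hQ)

lemma exists_isWalk_repeat_cycle (w : V → V → ℝ) (h : IsWalk E (p ++ x :: (c ++ x :: q)) s t)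
    (n : ℕ) :
    ∃ q', IsWalk E (p ++ x :: q') s t ∧
      walkLen w (p ++ x :: q') = walkLen w (p ++ x :: q) + n * walkLen w (x :: (c ++ [x])) := by
  obtain ⟨hq, hc⟩ := isWalk_insert_cycle_iff.1 h
  induction n with
  | zero => exact ⟨q, hq, by simp⟩
  | succ n ih =>
    obtain ⟨q', hq', hlen⟩ := ih
    refine ⟨c ++ x :: q', isWalk_insert_cycle_iff.2 ⟨hq', hc⟩, ?_⟩
    rw [walkLen_insert_cycle, hlen]
    push_cast
    ring

lemma HasNegativeCycle.not_isMinOn (h : HasNegativeCycle E w s t) (P : List V) :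
    ¬ IsMinOn (walkLen w) {Q | IsWalk E Q s t} P := by
  obtain ⟨p, x, c, q, hwalk, hneg⟩ := h
  intro hmin
  obtain ⟨n, hn⟩ := exists_nat_gt
    ((walkLen w (p ++ x :: q) - walkLen w P) / -walkLen w (x :: (c ++ [x])))
  obtain ⟨q', hq', hlen⟩ := exists_isWalk_repeat_cycle w hwalk n
  have hle : walkLen w P ≤ walkLen w (p ++ x :: q') := isMinOn_iff.1 hmin _ hq'
  rw [div_lt_iff₀ (neg_pos.2 hneg)] at hn
  linarith

lemma HasNegativeCycle.eventually_add_const (h : HasNegativeCycle E w s t) :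
    ∀ᶠ ε in 𝓝 0, HasNegativeCycle E (fun u z => w u z + ε) s t := by
  obtain ⟨p, x, c, q, hwalk, hneg⟩ := h
  filter_upwards [(tendsto_scalarize_zero (walkCost w (x :: (c ++ [x])))).eventually_lt_const hneg]
    with ε hε
  exact ⟨p, x, c, q, hwalk, by rwa [walkLen_add_const]⟩

lemma exists_eq_append_cons_append_cons_of_not_nodup (h : ¬ l.Nodup) :
    ∃ p x c q, l = p ++ x :: (c ++ x :: q) := by
  obtain ⟨x, hx⟩ := List.exists_duplicate_iff_not_nodup.2 h
  obtain ⟨l₁, l₂, rfl, hx₁, hx₂⟩ := List.cons_sublist_iff.1 (List.duplicate_iff_sublist.1 hx)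
  obtain ⟨p, c₁, rfl⟩ := List.append_of_mem hx₁
  obtain ⟨c₂, q, rfl⟩ := List.append_of_mem (List.singleton_sublist.1 hx₂)
  exact ⟨p, x, c₁ ++ c₂, q, by simp⟩

lemma exists_nodup_isWalk_walkCost_le (hcyc : ¬ HasNegativeCycle E w s t) (hl : IsWalk E l s t) :
    ∃ l', (IsWalk E l' s t ∧ l'.Nodup) ∧ walkCost w l' ≤ walkCost w l := by
  induction hn : l.length using Nat.strong_induction_on generalizing l with
  | h n ih =>
    by_cases hnodup : l.Nodup
    · exact ⟨l, ⟨hl, hnodup⟩, le_rfl⟩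
    obtain ⟨p, x, c, q, rfl⟩ := exists_eq_append_cons_append_cons_of_not_nodup hnodup
    have hcycle : 0 ≤ walkLen w (x :: (c ++ [x])) :=
      not_lt.1 fun hneg => hcyc ⟨p, x, c, q, hl, hneg⟩
    have hlt : (p ++ x :: q).length < (p ++ x :: (c ++ x :: q)).length := by
      simp only [List.length_append, List.length_cons]
      lia
    obtain ⟨l', hl', hle⟩ := ih _ (hn ▸ hlt) (isWalk_insert_cycle_iff.1 hl).1 rfl
    refine ⟨l', hl', hle.trans ⟨?_, Nat.sub_le_sub_right hlt.le 1⟩⟩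
    simpa only [walkCost, walkLen_insert_cycle, le_add_iff_nonneg_right] using hcycle

lemma finite_setOf_nodup (V : Type*) [Finite V] : {l : List V | l.Nodup}.Finite := by
  have := Fintype.ofFinite V
  exact Finite.of_fintype {l : List V // l.Nodup}

lemma eventually_isMinOn_walkLen_add_const_iff [Finite V] (E : V → V → Prop) (w : V → V → ℝ)
    (s t : V) :
    ∀ᶠ ε in 𝓝[>] 0, ∀ P ∈ {Q | IsWalk E Q s t},
      (IsMinOn (walkLen fun u z => w u z + ε) {Q | IsWalk E Q s t} P ↔
        IsMinOn (toLex ∘ walkCost w) {Q | IsWalk E Q s t} P) := by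
  by_cases hcyc : HasNegativeCycle E w s t
  · filter_upwards [hcyc.eventually_add_const.filter_mono nhdsWithin_le_nhds] with ε hε P hP
    have hlex : ¬ IsMinOn (toLex ∘ walkCost w) {Q | IsWalk E Q s t} P := fun h =>
      hcyc.not_isMinOn P ((isMinOn_toLex_iff (S := {Q | IsWalk E Q s t}) hP).1 h).1
    exact iff_of_false (hε.not_isMinOn P) hlex
  · have hfin : {Q | IsWalk E Q s t ∧ Q.Nodup}.Finite :=
      (finite_setOf_nodup V).subset fun _ hQ => hQ.2
    have hscal := eventually_isMinOn_scalarize_iff_toLex (c := walkCost w)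
      (S := {Q | IsWalk E Q s t}) hfin (fun _ hQ => hQ.1)
      fun _ => exists_nodup_isWalk_walkCost_le hcyc
    simpa only [funext (walkLen_add_const w _), Function.comp_def] using hscal

lemma isMinOn_toLex_walkCost_iff (hP : IsWalk E P s t) :
    IsMinOn (toLex ∘ walkCost w) {Q | IsWalk E Q s t} P ↔
      (walkLen w P : EReal) = edist E w s t ∧
        ∀ Q, IsWalk E Q s t → (walkLen w Q : EReal) = edist E w s t → P.length ≤ Q.length := by
  rw [coe_walkLen_eq_edist_iff hP]
  refine (isMinOn_toLex_iff (S := {Q | IsWalk E Q s t}) hP).trans (and_congr_right fun _ => ?_)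
  simp only [isMinOn_iff (f := fun l : List V => l.length - 1), Set.mem_ofPred_eq, and_imp]
  refine forall₂_congr fun Q hQ => ?_
  rw [coe_walkLen_eq_edist_iff hQ, Nat.sub_le_sub_iff_right hQ.one_le_length]

end Walks

theorem stmt10_general {V : Type*} [Finite V] (E : V → V → Prop) (w : V → V → ℝ) :
    ∃ ε₀ : ℝ, 0 < ε₀ ∧ ∀ ε : ℝ, 0 < ε → ε ≤ ε₀ →
      ∀ s t : V,
        (∀ P : List V, IsWalk E P s t →
          (((walkLen (fun u z => w u z + ε) P : EReal) =
              edist E (fun u z => w u z + ε) s t) ↔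
            ((walkLen w P : EReal) = edist E w s t ∧
              ∀ Q : List V, IsWalk E Q s t → (walkLen w Q : EReal) = edist E w s t →
                P.length ≤ Q.length))) ∧
        (∀ P Q : List V, IsWalk E P s t → IsWalk E Q s t →
          (walkLen (fun u z => w u z + ε) P : EReal) = edist E (fun u z => w u z + ε) s t →
          (walkLen (fun u z => w u z + ε) Q : EReal) = edist E (fun u z => w u z + ε) s t →
          P.length = Q.length) := by
  have hmin := eventually_all.2 fun s => eventually_all.2 fun t =>
    eventually_isMinOn_walkLen_add_const_iff E w s t
  obtain ⟨ε₀, hε₀, hsub⟩ := mem_nhdsGT_iff_exists_Ioc_subset.1 hmin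
  refine ⟨ε₀, hε₀, fun ε hε hle s t => ?_⟩
  have hiff (P : List V) (hP : IsWalk E P s t) :=
    (coe_walkLen_eq_edist_iff hP).trans
      ((hsub ⟨hε, hle⟩ s t P hP).trans (isMinOn_toLex_walkCost_iff hP))
  refine ⟨hiff, fun P Q hP hQ hPmin hQmin => ?_⟩
  obtain ⟨hPw, hPfewest⟩ := (hiff P hP).1 hPmin
  obtain ⟨hQw, hQfewest⟩ := (hiff Q hQ).1 hQmin
  exact (hPfewest Q hQ hQw).antisymm (hQfewest P hP hPw)

/-- For a finite directed graph with nonnegative weights there is `ε₀ > 0`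
such that for all `0 < ε ≤ ε₀` and all reachable pairs `s, t`: a walk `P` from `s` to `t`
is shortest under the perturbed weights `w + ε` iff it is a shortest walk under `w` with the
minimum number of edges among all shortest `s`–`t` walks under `w`; in particular under
`w + ε` all shortest walks between a fixed pair have the same number of edges. -/
theorem stmt10 {V : Type} [Fintype V]
    (E : V → V → Prop) (w : V → V → ℝ) (hw : ∀ u z, E u z → 0 ≤ w u z) :
    ∃ ε₀ : ℝ, 0 < ε₀ ∧ ∀ ε : ℝ, 0 < ε → ε ≤ ε₀ →
      ∀ s t : V, (∃ l, IsWalk E l s t) →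
        (∀ P : List V, IsWalk E P s t →
          (((walkLen (fun u z => w u z + ε) P : EReal) =
              edist E (fun u z => w u z + ε) s t) ↔
            ((walkLen w P : EReal) = edist E w s t ∧
              ∀ Q : List V, IsWalk E Q s t → (walkLen w Q : EReal) = edist E w s t →
                P.length ≤ Q.length))) ∧
        (∀ P Q : List V, IsWalk E P s t → IsWalk E Q s t →
          (walkLen (fun u z => w u z + ε) P : EReal) = edist E (fun u z => w u z + ε) s t →
          (walkLen (fun u z => w u z + ε) Q : EReal) = edist E (fun u z => w u z + ε) s t →
          P.length = Q.length) := by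
  obtain ⟨ε₀, hε₀, h⟩ := stmt10_general E w
  exact ⟨ε₀, hε₀, fun ε hε hle s t _ => h ε hε hle s t⟩
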